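/- Let $M$ be a matroid without loops on a finite ground set $E$, with rank function $r$, and let $k \geq 1$ be an integer. Then $\chi(M) \leq k$ (i.e., $E$ can be partitioned into at most $k$ independent sets of $M$) if and only if every subset $X \subseteq E$ satisfies $k \cdot r(X) \geq |X|$. -/

import Mathlib

/-!
If `E` is a union of `k` independent sets, then every `X ⊆ E` is a union of `k` independent subsets
of `X`, each of size at most `r(X)`.

For the converse, give each element a list of admissible colors, encoded by the sets `S i` of
elements for which color `i` is admissible, and consider the condition
`|X| ≤ ∑ i, r(X ∩ S i)` for all `X ⊆ E`. It holds when every color is admissible everywhere: this is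
the hypothesis `|X| ≤ k * r(X)`. Take an inclusion-minimal family `S` satisfying it. If some `e` had
two admissible colors `a ≠ b`, then forbidding `a` at `e` would violate the condition at some set
`X`, and forbidding `b` would violate it at some set `Y`; submodularity of `r`, applied color by
color, turns these two violations into a failure of the original condition at `X ∪ Y` or at
`(X ∩ Y) \ {e}` (`exists_coloring_of_submodular`). So each element has exactly one admissible color,
and the condition at a color class says that its rank is at least its size, i.e. that it is
independent.
-/

/-- The rank of a set `X` in a matroid `M`: the maximum cardinality of an
independent set of `M` contained in `X`. -/
noncomputable def matroidRank {α : Type*} (M : Matroid α) (X : Set α) : ℕ :=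
  sSup {n : ℕ | ∃ I, I ⊆ X ∧ M.Indep I ∧ I.ncard = n}

/-- The combinatorial core, for an arbitrary monotone submodular function `r` in place of a matroid
rank function. -/
lemma exists_coloring_of_submodular {α ι : Type*} [DecidableEq α] [Fintype ι] [DecidableEq ι]
    [Nonempty ι] (E : Finset α) (r : Finset α → ℕ) (h0 : r ∅ = 0) (hmono : Monotone r)
    (hsub : ∀ X Y, r (X ∪ Y) + r (X ∩ Y) ≤ r X + r Y)
    (hr : ∀ X ⊆ E, X.card ≤ Fintype.card ι * r X) :
    ∃ c : α → ι, ∀ i, (E.filter (c · = i)).card ≤ r (E.filter (c · = i)) := by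
  let P : (ι → Finset α) → Prop := fun S => ∀ X ⊆ E, X.card ≤ ∑ i, r (X ∩ S i)
  have hP : P fun _ => E := by
    intro X hX
    simpa [Finset.inter_eq_left.2 hX] using hr X hX
  obtain ⟨S, hS⟩ := exists_minimal_of_wellFoundedLT P ⟨_, hP⟩
  have hSP : P S := hS.prop
  have hex : ∀ e, ∃ i, e ∈ E → e ∈ S i := by
    intro e
    by_contra! hcon
    have he : e ∈ E := (hcon (Classical.arbitrary ι)).1
    have h := hSP {e} (by simpa using he)
    have hz : ∀ i, ({e} : Finset α) ∩ S i = ∅ := fun i =>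
      Finset.singleton_inter_of_notMem (hcon i).2
    simp [hz, h0] at h
  -- By minimality, forbidding an admissible color at an element violates the condition.
  have hviol : ∀ e a, e ∈ S a →
      ∃ X ⊆ E, ∑ i, r (X ∩ Function.update S a ((S a).erase e) i) < X.card := by
    intro e a hea
    by_contra! hcon
    have hle : Function.update S a ((S a).erase e) ≤ S := by
      refine update_le_iff.2 ⟨?_, fun _ _ => le_rfl⟩
      exact Finset.erase_subset _ _
    have h := hS.le_of_le hcon hle a
    simp only [Function.update_self] at h
    exact Finset.notMem_erase e (S a) (h hea)
  have huniq : ∀ e a b, e ∈ S a → e ∈ S b → a = b := by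
    intro e a b ha hb
    by_contra hab
    obtain ⟨X, hXE, hX⟩ := hviol e a ha
    obtain ⟨Y, hYE, hY⟩ := hviol e b hb
    have hU := hSP (X ∪ Y) (Finset.union_subset hXE hYE)
    have hI := hSP ((X ∩ Y).erase e)
      ((Finset.erase_subset _ _).trans (Finset.inter_subset_left.trans hXE))
    have hcard := Finset.card_union_add_card_inter X Y
    have hpred : (X ∩ Y).card ≤ ((X ∩ Y).erase e).card + 1 := by
      have := Finset.pred_card_le_card_erase (s := X ∩ Y) (a := e)
      omega
    -- A violating set contains `e`, since otherwise erasing `e` would change nothing.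
    have heX : e ∈ X := by
      by_contra heX
      refine absurd (hSP X hXE) (not_le.2 (lt_of_le_of_lt (Finset.sum_le_sum fun i _ => ?_) hX))
      refine hmono fun x hx => ?_
      simp only [Function.update_apply, Finset.mem_inter] at hx ⊢
      refine ⟨hx.1, ?_⟩
      split_ifs with h
      · subst h
        exact Finset.mem_erase.2 ⟨fun h => heX (h ▸ hx.1), hx.2⟩
      · exact hx.2
    have heY : e ∈ Y := by
      by_contra heY
      refine absurd (hSP Y hYE) (not_le.2 (lt_of_le_of_lt (Finset.sum_le_sum fun i _ => ?_) hY))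
      refine hmono fun x hx => ?_
      simp only [Function.update_apply, Finset.mem_inter] at hx ⊢
      refine ⟨hx.1, ?_⟩
      split_ifs with h
      · subst h
        exact Finset.mem_erase.2 ⟨fun h => heY (h ▸ hx.1), hx.2⟩
      · exact hx.2
    have hsum : ∑ i, r ((X ∪ Y) ∩ S i) + ∑ i, r ((X ∩ Y).erase e ∩ S i) ≤
        ∑ i, r (X ∩ Function.update S a ((S a).erase e) i) +
          ∑ i, r (Y ∩ Function.update S b ((S b).erase e) i) := by
      rw [← Finset.sum_add_distrib, ← Finset.sum_add_distrib]
      refine Finset.sum_le_sum fun i _ => le_trans (add_le_add (hmono ?_) (hmono ?_)) (hsub _ _)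
      · -- Since `a ≠ b`, the element `e` survives in at least one of the two sets.
        intro x hx
        simp only [Function.update_apply, Finset.mem_inter, Finset.mem_union] at hx ⊢
        by_cases hxe : x = e
        · subst hxe
          by_cases hia : i = a
          · subst hia
            exact Or.inr ⟨heY, by simpa [hab] using ha⟩
          · exact Or.inl ⟨heX, by simpa [hia] using hx.2⟩
        · rcases hx.1 with h | h
          · exact Or.inl ⟨h, by split_ifs with h' <;> simp_all⟩
          · exact Or.inr ⟨h, by split_ifs with h' <;> simp_all⟩
      · intro x hx
        simp only [Function.update_apply, Finset.mem_inter, Finset.mem_erase] at hx ⊢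
        obtain ⟨⟨hxe, hxX, hxY⟩, hxS⟩ := hx
        refine ⟨⟨hxX, ?_⟩, hxY, ?_⟩ <;> split_ifs with h <;> simp_all
    omega
  choose c hc using hex
  refine ⟨c, fun i => ?_⟩
  refine (hSP _ (Finset.filter_subset _ _)).trans ?_
  rw [Finset.sum_eq_single i]
  · exact hmono Finset.inter_subset_left
  · intro j _ hji
    have : E.filter (c · = i) ∩ S j = ∅ := by
      refine Finset.eq_empty_of_forall_notMem fun x hx => ?_
      simp only [Finset.mem_inter, Finset.mem_filter] at hx
      exact hji ((huniq x _ _ hx.2 (hc x hx.1.1)).trans hx.1.2)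
    rw [this, h0]
  · simp

lemma ncard_le_matroidRank {α : Type*} (M : Matroid α) {I X : Set α} (hX : X.Finite)
    (hIX : I ⊆ X) (hI : M.Indep I) : I.ncard ≤ matroidRank M X := by
  refine le_csSup ⟨X.ncard, ?_⟩ ⟨I, hIX, hI, rfl⟩
  rintro _ ⟨J, hJ, -, rfl⟩
  exact Set.ncard_le_ncard hJ hX

lemma cast_matroidRank {α : Type*} (M : Matroid α) {X : Set α} (hX : X.Finite) :
    (matroidRank M X : ℕ∞) = M.eRk X := by
  apply le_antisymm
  · have hmem : matroidRank M X ∈ {n : ℕ | ∃ I, I ⊆ X ∧ M.Indep I ∧ I.ncard = n} := by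
      refine Nat.sSup_mem ⟨0, ∅, by simp⟩ ⟨X.ncard, ?_⟩
      rintro _ ⟨J, hJ, -, rfl⟩
      exact Set.ncard_le_ncard hJ hX
    obtain ⟨I, hIX, hI, hcard⟩ := hmem
    rw [← hcard, (hX.subset hIX).cast_ncard_eq]
    exact hI.encard_le_eRk_of_subset hIX
  · rw [Matroid.eRk_le_iff]
    intro I hIX hI
    rw [← (hX.subset hIX).cast_ncard_eq]
    exact_mod_cast ncard_le_matroidRank M hX hIX hI

/-- For a loopless matroid `M` on a finite ground set and `k ≥ 1`:
`χ(M) ≤ k` (the ground set can be split into at most `k` independent sets,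
i.e. there is a coloring with `k` colors whose color classes are independent)
iff every subset `X` of the ground set satisfies `k * r(X) ≥ |X|`. -/
theorem matroid_colorable_iff_rank {α : Type*} (M : Matroid α)
    (hfin : M.E.Finite) (hloopless : ∀ e ∈ M.E, M.Indep {e})
    (k : ℕ) (hk : 1 ≤ k) :
    (∃ c : α → Fin k, ∀ i : Fin k, M.Indep (M.E ∩ c ⁻¹' {i})) ↔
      ∀ X ⊆ M.E, X.ncard ≤ k * matroidRank M X := by
  classical
  constructor
  · rintro ⟨c, hc⟩ X hX
    have hXfin := hfin.subset hX
    lift X to Finset α using hXfin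
    rw [Set.ncard_coe_finset, Finset.card_eq_sum_card_fiberwise (f := c) (t := Finset.univ) (by simp)]
    refine (Finset.sum_le_card_nsmul _ _ (matroidRank M X) fun i _ => ?_).trans (by simp)
    rw [← Set.ncard_coe_finset]
    refine ncard_le_matroidRank M X.finite_toSet (by simp +contextual [Set.subset_def]) ((hc i).subset ?_)
    intro x hx
    simp only [Finset.coe_filter, Set.mem_ofPred_eq] at hx
    exact ⟨hX hx.1, hx.2⟩
  · intro h
    have : Nonempty (Fin k) := ⟨⟨0, hk⟩⟩
    have h0 : matroidRank M ((∅ : Finset α) : Set α) = 0 := by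
      have := cast_matroidRank M (Set.finite_empty (α := α))
      simpa using this
    have hmono : Monotone fun X : Finset α => matroidRank M (X : Set α) := by
      intro X Y hXY
      have hle := M.eRk_mono (Finset.coe_subset.2 hXY)
      rw [← cast_matroidRank M X.finite_toSet, ← cast_matroidRank M Y.finite_toSet] at hle
      exact_mod_cast hle
    have hsub : ∀ X Y : Finset α, matroidRank M ((X ∪ Y : Finset α) : Set α) +
        matroidRank M ((X ∩ Y : Finset α) : Set α) ≤
          matroidRank M (X : Set α) + matroidRank M (Y : Set α) := by
      intro X Y
      have hle := M.eRk_inter_add_eRk_union_le (X : Set α) Y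
      rw [← Finset.coe_inter, ← Finset.coe_union] at hle
      simp only [← cast_matroidRank M (Finset.finite_toSet _)] at hle
      rw [add_comm]
      exact_mod_cast hle
    obtain ⟨c, hc⟩ := exists_coloring_of_submodular (ι := Fin k) hfin.toFinset
      (fun X => matroidRank M (X : Set α)) h0 hmono hsub fun X hX => by
        simpa using h X (by simpa using hX)
    refine ⟨c, fun i => ?_⟩
    have hi := hc i
    have heq : ((hfin.toFinset.filter (c · = i) : Finset α) : Set α) = M.E ∩ c ⁻¹' {i} := by
      ext x
      simp
    have hF := (hfin.toFinset.filter (c · = i)).finite_toSet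
    rw [← heq]
    refine (M.isRkFinite_of_finite hF).indep_of_encard_le_eRk ?_
    rw [← cast_matroidRank M hF, Set.encard_coe_eq_coe_finsetCard]
    exact_mod_cast hi
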